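/- Let t be a non-source node of a finite directed acyclic graph G with source s, and let n = mincut(s,t). For minimum cuts CUT₁, CUT₂ between s and t, CUT₁ ≤ CUT₂ (CUT₁ separates CUT₂ from s) if and only if there exist n edge-disjoint paths P₁, …, P_n from s to t such that for each i, writing P_i ∩ CUT₁ = {e₁ᵢ} and P_i ∩ CUT₂ = {e₂ᵢ}, the edge e₁ᵢ precedes or equals e₂ᵢ on P_i. -/

import Mathlib

open Finset

/-- Consecutive edges in the list match head-to-tail. -/
def EChain {V E : Type*} (tl hd : E → V) (p : List E) : Prop :=
  p.Chain' (fun d e => hd d = tl e)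

/-- A (nonempty) directed path of edges starting at node `s`. -/
def PathFrom {V E : Type*} (tl hd : E → V) (s : V) (p : List E) : Prop :=
  p ≠ [] ∧ EChain tl hd p ∧ ∀ e ∈ p.head?, tl e = s

/-- The directed graph is acyclic: no nonempty edge-chain returns to its start. -/
def Acyclic {V E : Type*} (tl hd : E → V) : Prop :=
  ∀ p : List E, p ≠ [] → EChain tl hd p →
    ∀ d ∈ p.head?, ∀ e ∈ p.getLast?, hd e ≠ tl d

/-- `B` separates the edge set `A` from `s`: every directed path from `s`
ending with an edge of `A` passes through an edge of `B` (i.e. `B` is a cut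
between `s` and `A`). -/
def Separates {V E : Type*} (tl hd : E → V) (s : V) (A B : Finset E) : Prop :=
  ∀ p : List E, PathFrom tl hd s p → (∃ e ∈ p.getLast?, e ∈ A) → ∃ b ∈ B, b ∈ p

/-- The minimum cut capacity between `s` and the edge set `A`. -/
noncomputable def mincut {V E : Type*} [Fintype E] (tl hd : E → V) (s : V)
    (A : Finset E) : ℕ :=
  sInf {n | ∃ B : Finset E, Separates tl hd s A B ∧ B.card = n}

/-- `B` is a minimum cut between `s` and the edge set `A`. -/
def IsMinCut {V E : Type*} [Fintype E] (tl hd : E → V) (s : V) (A B : Finset E) : Prop :=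
  Separates tl hd s A B ∧ B.card = mincut tl hd s A

/-- An edge set is regular if its cardinality equals its minimum cut capacity from `s`. -/
def Regular {V E : Type*} [Fintype E] (tl hd : E → V) (s : V) (A : Finset E) : Prop :=
  A.card = mincut tl hd s A

/-- `A ∼ A'`: the two edge sets have a common minimum cut from `s`. -/
def EquivSets {V E : Type*} [Fintype E] (tl hd : E → V) (s : V) (A A' : Finset E) : Prop :=
  ∃ C : Finset E, IsMinCut tl hd s A C ∧ IsMinCut tl hd s A' C

/-- `A₁ ≺ A₂`: `|A₁| < |A₂|` and some minimum cut between `s` and `A₂`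
also separates `A₁` from `s`. -/
def Dominates {V E : Type*} [Fintype E] (tl hd : E → V) (s : V) (A₁ A₂ : Finset E) : Prop :=
  A₁.card < A₂.card ∧
    ∃ C : Finset E, IsMinCut tl hd s A₂ C ∧ Separates tl hd s A₁ C

/-- A directed path of edges from node `s` to node `t`. -/
def NPathFromTo {V E : Type*} (tl hd : E → V) (s t : V) (p : List E) : Prop :=
  PathFrom tl hd s p ∧ ∀ e ∈ p.getLast?, hd e = t

/-- `B` is a cut between the nodes `s` and `t`. -/
def NSeparates {V E : Type*} (tl hd : E → V) (s t : V) (B : Finset E) : Prop :=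
  ∀ p : List E, NPathFromTo tl hd s t p → ∃ b ∈ B, b ∈ p

/-- The minimum cut capacity between the nodes `s` and `t`. -/
noncomputable def nmincut {V E : Type*} [Fintype E] (tl hd : E → V) (s t : V) : ℕ :=
  sInf {n | ∃ B : Finset E, NSeparates tl hd s t B ∧ B.card = n}

/-- `B` is a minimum cut between the nodes `s` and `t`. -/
def IsNodeMinCut {V E : Type*} [Fintype E] (tl hd : E → V) (s t : V) (B : Finset E) : Prop :=
  NSeparates tl hd s t B ∧ B.card = nmincut tl hd s t

/-- `d ≤ e` for edges: there is a directed path starting with `d` and ending with `e`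
(in particular `d ≤ d`). -/
def EdgeLe {V E : Type*} (tl hd : E → V) (d e : E) : Prop :=
  ∃ p : List E, EChain tl hd p ∧ p.head? = some d ∧ p.getLast? = some e

/-- A family of pairwise edge-disjoint paths. -/
def EdgeDisjoint {E : Type*} {n : ℕ} (P : Fin n → List E) : Prop :=
  ∀ i j, i ≠ j → List.Disjoint (P i) (P j)

/-- The primary minimum cut between nodes `s` and `t`: a minimum cut separating
every minimum cut between `s` and `t` from `s`. -/
def IsPrimaryNodeMinCut {V E : Type*} [Fintype E] (tl hd : E → V) (s t : V)
    (C : Finset E) : Prop :=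
  IsNodeMinCut tl hd s t C ∧
    ∀ C' : Finset E, IsNodeMinCut tl hd s t C' → Separates tl hd s C' C

/-- The primary minimum cut between `s` and an edge set `A`. -/
def IsPrimaryMinCut {V E : Type*} [Fintype E] (tl hd : E → V) (s : V)
    (A C : Finset E) : Prop :=
  IsMinCut tl hd s A C ∧
    ∀ C' : Finset E, IsMinCut tl hd s A C' → Separates tl hd s C' C

/-- The equivalence class (within the collection `𝒜`) of the wiretap set `A`
under the relation `∼`. -/
def ClassOf {V E : Type*} [Fintype E] (tl hd : E → V) (s : V)
    (𝒜 : Finset (Finset E)) (A : Finset E) : Set (Finset E) :=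
  {A' | A' ∈ 𝒜 ∧ EquivSets tl hd s A A'}

/-- Domination amongst (distinct) equivalence classes: some common minimum cut of all
the sets in `C₂` separates every set in `C₁` from `s`. -/
def ClDominates {V E : Type*} [Fintype E] (tl hd : E → V) (s : V)
    (C₁ C₂ : Set (Finset E)) : Prop :=
  C₁ ≠ C₂ ∧ ∃ CUT : Finset E,
    (∀ A ∈ C₂, IsMinCut tl hd s A CUT) ∧ (∀ A ∈ C₁, Separates tl hd s A CUT)

/-- `p` is an `A`-`B` path for the relation `R`. -/
def RPath {E : Type*} (R : Finset (E × E)) (A B : Finset E) (p : List E) : Prop :=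
  p.IsChain (fun d e => (d, e) ∈ R) ∧ (∃ a ∈ A, p.head? = some a) ∧ ∃ b ∈ B, p.getLast? = some b

def RSep {E : Type*} (R : Finset (E × E)) (A B S : Finset E) : Prop :=
  ∀ p, RPath R A B p → ∃ z ∈ S, z ∈ p

/-- Split at the first element of `T`. -/
theorem split_first {E : Type*} (T : Finset E) (p : List E) (h : ∃ z ∈ T, z ∈ p) :
    ∃ a v b, p = a ++ v :: b ∧ v ∈ T ∧ ∀ u ∈ a, u ∉ T := by
  induction p with
  | nil => simp at h
  | cons c p ih =>
    by_cases hc : c ∈ T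
    · exact ⟨[], c, p, rfl, hc, by simp⟩
    · obtain ⟨z, hz, hzp⟩ := h
      have : z ∈ p := by
        rcases List.mem_cons.1 hzp with rfl | h
        · exact absurd hz hc
        · exact h
      obtain ⟨a, v, b, rfl, hv, ha⟩ := ih ⟨z, hz, this⟩
      exact ⟨c :: a, v, b, rfl, hv, by
        intro u hu
        rcases List.mem_cons.1 hu with rfl | h
        · exact hc
        · exact ha u h⟩

/-- Split at the last element of `T`. -/
theorem split_last {E : Type*} (T : Finset E) (p : List E) (h : ∃ z ∈ T, z ∈ p) :
    ∃ a v b, p = a ++ v :: b ∧ v ∈ T ∧ ∀ u ∈ b, u ∉ T := by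
  obtain ⟨a, v, b, hp, hv, ha⟩ := split_first T p.reverse (by simpa using h)
  refine ⟨b.reverse, v, a.reverse, ?_, hv, by simpa using ha⟩
  rw [← List.reverse_reverse p, hp]
  simp

theorem index_of_disjoint {E : Type*} {n : ℕ} (P : Fin n → List E) (hP : EdgeDisjoint P)
    (T : Finset E) (hT : T.card = n) (f : Fin n → E) (hf : ∀ i, f i ∈ P i)
    (hfT : ∀ i, f i ∈ T) :
    (∀ v ∈ T, ∃ i, f i = v) ∧ ∀ i, ∀ v ∈ T, v ∈ P i → v = f i := by
  have hinj : Function.Injective f := by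
    intro i j hij
    by_contra hne
    exact hP i j hne (hf i) (hij ▸ hf j)
  have hsurj : ∀ v ∈ T, ∃ i, f i = v := by
    have := Finset.surj_on_of_inj_on_of_card_le (s := (Finset.univ : Finset (Fin n))) (t := T)
      (fun i _ => f i) (fun i _ => hfT i) (fun i j _ _ h => hinj h) (by simp [hT])
    intro v hv
    obtain ⟨i, _, h⟩ := this v hv
    exact ⟨i, h.symm⟩
  refine ⟨hsurj, fun i v hv hvi => ?_⟩
  obtain ⟨j, rfl⟩ := hsurj v hv
  by_cases hne : j = i
  · rw [hne]
  · exact absurd hvi (hP j i hne (hf j))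

theorem menger_aux {E : Type*} (k : ℕ) : ∀ (R : Finset (E × E)), R.card = k →
    ∀ (A B : Finset E) (n : ℕ), (∀ S, RSep R A B S → n ≤ S.card) →
    ∃ P : Fin n → List E, (∀ i, RPath R A B (P i)) ∧ EdgeDisjoint P := by
  classical
  induction k with
  | zero =>
    intro R hR A B n h
    rw [Finset.card_eq_zero] at hR
    subst hR
    have hn := h (A ∩ B) (by
      rintro p ⟨hc, ⟨a, ha, hpa⟩, b, hb, hpb⟩
      match p, hc, hpa, hpb with
      | [c], _, hpa, hpb =>
        simp only [List.head?_cons, Option.some.injEq, List.getLast?_singleton] at hpa hpb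
        subst hpa; subst hpb
        exact ⟨c, by simp [ha, hb], by simp⟩
      | c :: d :: p, hc, _, _ => simp at hc)
    obtain ⟨T, hT, hTn⟩ := Finset.exists_subset_card_eq hn
    let e := (Finset.equivFinOfCardEq hTn).symm
    refine ⟨fun i => [(e i : E)], fun i => ?_, fun i j hij => ?_⟩
    · have := hT (e i).2
      rw [Finset.mem_inter] at this
      exact ⟨by simp, ⟨e i, this.1, by simp⟩, e i, this.2, by simp⟩
    · simp only [List.disjoint_singleton, List.mem_singleton]
      intro h
      exact hij (e.injective (Subtype.ext h)).symm
  | succ k ih =>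
    intro R hR A B n h
    obtain ⟨⟨x, y⟩, hxy⟩ : R.Nonempty := by
      rw [← Finset.card_pos]; omega
    have hR' : (R.erase (x, y)).card = k := by
      rw [Finset.card_erase_of_mem hxy]; omega
    set R' := R.erase (x, y) with hRdef
    have hsub : ∀ {d e}, (d, e) ∈ R' → (d, e) ∈ R := fun h => Finset.mem_of_mem_erase h
    by_cases hall : ∀ S, RSep R' A B S → n ≤ S.card
    · obtain ⟨P, hP, hd⟩ := ih R' hR' A B n hall
      exact ⟨P, fun i => ⟨(hP i).1.imp fun _ _ => hsub, (hP i).2⟩, hd⟩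
    push Not at hall
    obtain ⟨S, hS, hSn⟩ := hall
    -- chains avoiding the erased arc
    have chx : ∀ p : List E, p.IsChain (fun d e => (d, e) ∈ R) → ∀ a v, p = a ++ [v] → x ∉ a →
        p.IsChain (fun d e => (d, e) ∈ R') := by
      intro p hp a
      induction a generalizing p with
      | nil => rintro v rfl _; simp
      | cons c a iha =>
        rintro v rfl hx
        simp only [List.mem_cons, not_or] at hx
        rw [List.cons_append, List.isChain_cons] at hp ⊢
        refine ⟨fun z hz => ?_, iha _ hp.2 v rfl hx.2⟩
        have := hp.1 z hz
        rw [hRdef, Finset.mem_erase]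
        exact ⟨fun h => hx.1 (congrArg Prod.fst h).symm, this⟩
    have chy : ∀ b : List E, ∀ v, (v :: b).IsChain (fun d e => (d, e) ∈ R) → y ∉ b →
        (v :: b).IsChain (fun d e => (d, e) ∈ R') := by
      intro b
      induction b with
      | nil => simp
      | cons c b ihb =>
        intro v hp hy
        simp only [List.mem_cons, not_or] at hy
        rw [List.isChain_cons_cons] at hp ⊢
        refine ⟨?_, ihb _ hp.2 hy.2⟩
        rw [hRdef, Finset.mem_erase]
        exact ⟨fun h => hy.1 (congrArg Prod.snd h).symm, hp.1⟩
    have sepx : RSep R A B (insert x S) := by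
      intro p hp
      by_cases hx : x ∈ p
      · exact ⟨x, by simp, hx⟩
      · obtain ⟨hc, hA, b, hb, hpb⟩ := hp
        obtain ⟨a, rfl⟩ := List.getLast?_eq_some_iff.1 hpb
        obtain ⟨z, hz, hzp⟩ := hS _ ⟨chx _ hc a b rfl (fun h => hx (by simp [h])), hA, b, hb, hpb⟩
        exact ⟨z, by simp [hz], hzp⟩
    have sepy : RSep R A B (insert y S) := by
      intro p hp
      by_cases hy : y ∈ p
      · exact ⟨y, by simp, hy⟩
      · obtain ⟨hc, ⟨a, ha, hpa⟩, hB⟩ := hp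
        obtain ⟨b, rfl⟩ := List.head?_eq_some_iff.1 hpa
        obtain ⟨z, hz, hzp⟩ := hS _ ⟨chy _ _ hc (fun h => hy (by simp [h])), ⟨a, ha, hpa⟩, hB⟩
        exact ⟨z, by simp [hz], hzp⟩
    have hcx := h _ sepx
    have hcy := h _ sepy
    have hxS : x ∉ S := by
      intro hx; rw [Finset.insert_eq_of_mem hx] at hcx; omega
    have hyS : y ∉ S := by
      intro hy; rw [Finset.insert_eq_of_mem hy] at hcy; omega
    have hnx : (insert x S).card = n := by
      rw [Finset.card_insert_of_notMem hxS] at hcx ⊢; omega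
    have hny : (insert y S).card = n := by
      rw [Finset.card_insert_of_notMem hyS] at hcy ⊢; omega
    -- linkages on both sides
    obtain ⟨P, hP, hPd⟩ := ih R' hR' A (insert x S) n (by
      intro T hT
      apply h
      intro p hp
      obtain ⟨a, v, b, rfl, hv, ha⟩ := split_first _ p (sepx p hp)
      obtain ⟨hc, ⟨c, hcA, hpc⟩, hB⟩ := hp
      obtain ⟨z, hz, hzp⟩ := hT (a ++ [v]) ⟨chx _ (List.isChain_split.1 hc).1 a v rfl
        (fun h => ha x h (by simp)), ⟨c, hcA, by cases a <;> simpa using hpc⟩, v, hv, by simp⟩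
      refine ⟨z, hz, ?_⟩
      simp only [List.mem_append, List.mem_cons, List.not_mem_nil, or_false] at hzp ⊢
      tauto)
    obtain ⟨Q, hQ, hQd⟩ := ih R' hR' (insert y S) B n (by
      intro T hT
      apply h
      intro p hp
      obtain ⟨a, v, b, rfl, hv, hb⟩ := split_last _ p (sepy p hp)
      obtain ⟨hc, hA, c, hcB, hpc⟩ := hp
      obtain ⟨z, hz, hzp⟩ := hT (v :: b) ⟨chy _ _ (List.isChain_split.1 hc).2
        (fun h => hb y h (by simp)), ⟨v, hv, by simp⟩, c, hcB, by
          simpa [List.getLast?_append] using hpc⟩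
      refine ⟨z, hz, ?_⟩
      simp only [List.mem_append, List.mem_cons] at hzp ⊢
      tauto)
    -- trim and index
    have hl : ∃ l : E → List E, (∀ v ∈ insert x S, RPath R' A (insert x S) (l v ++ [v]) ∧
        ∀ u ∈ l v, u ∉ insert x S) ∧
        ∀ v ∈ insert x S, ∀ w ∈ insert x S, v ≠ w → List.Disjoint (l v ++ [v]) (l w ++ [w]) := by
      have : ∀ i, ∃ a v b, P i = a ++ v :: b ∧ v ∈ insert x S ∧ ∀ u ∈ a, u ∉ insert x S := by
        intro i
        obtain ⟨_, _, b, hb, hpb⟩ := hP i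
        exact split_first _ _ ⟨b, hb, List.mem_of_getLast? hpb⟩
      choose a f b hab hf ha using this
      obtain ⟨hs, -⟩ := index_of_disjoint P hPd _ hnx f (fun i => by rw [hab]; simp) hf
      have : Nonempty (Fin n) := ⟨⟨0, by omega⟩⟩
      choose! g hg using hs
      have hsubP : ∀ i, ∀ u ∈ a i ++ [f i], u ∈ P i := by
        intro i u hu
        rw [hab]
        simp only [List.mem_append, List.mem_cons, List.not_mem_nil, or_false] at hu ⊢
        tauto
      refine ⟨fun v => a (g v), fun v hv => ⟨?_, ha _⟩, fun v hv w hw hne => ?_⟩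
      · obtain ⟨hc, ⟨c, hcA, hpc⟩, _⟩ := hP (g v)
        rw [hab, hg v hv] at hc hpc
        exact ⟨(List.isChain_split.1 hc).1,
          ⟨c, hcA, by simpa [List.head?_append] using hpc⟩, v, hv, by simp⟩
      · intro u hu hu'
        have h1 := hsubP (g v) u (by rw [hg v hv]; exact hu)
        have h2 := hsubP (g w) u (by rw [hg w hw]; exact hu')
        refine hPd (g v) (g w) (fun h => hne ?_) h1 h2
        rw [← hg v hv, ← hg w hw, h]
    have hr : ∃ r : E → List E, (∀ v ∈ insert y S, RPath R' (insert y S) B (v :: r v) ∧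
        ∀ u ∈ r v, u ∉ insert y S) ∧
        ∀ v ∈ insert y S, ∀ w ∈ insert y S, v ≠ w → List.Disjoint (v :: r v) (w :: r w) := by
      have : ∀ i, ∃ a v b, Q i = a ++ v :: b ∧ v ∈ insert y S ∧ ∀ u ∈ b, u ∉ insert y S := by
        intro i
        obtain ⟨_, ⟨b, hb, hpb⟩, _⟩ := hQ i
        exact split_last _ _ ⟨b, hb, List.mem_of_head? hpb⟩
      choose a f b hab hf hb using this
      obtain ⟨hs, -⟩ := index_of_disjoint Q hQd _ hny f (fun i => by rw [hab]; simp) hf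
      have : Nonempty (Fin n) := ⟨⟨0, by omega⟩⟩
      choose! g hg using hs
      have hsubQ : ∀ i, ∀ u ∈ f i :: b i, u ∈ Q i := by
        intro i u hu
        rw [hab]
        simp only [List.mem_append, List.mem_cons] at hu ⊢
        tauto
      refine ⟨fun v => b (g v), fun v hv => ⟨?_, hb _⟩, fun v hv w hw hne => ?_⟩
      · obtain ⟨hc, _, c, hcB, hpc⟩ := hQ (g v)
        rw [hab, hg v hv] at hc hpc
        exact ⟨(List.isChain_split.1 hc).2, ⟨v, hv, by simp⟩, c, hcB, by
          simpa [List.getLast?_append] using hpc⟩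
      · intro u hu hu'
        have h1 := hsubQ (g v) u (by rw [hg v hv]; exact hu)
        have h2 := hsubQ (g w) u (by rw [hg w hw]; exact hu')
        refine hQd (g v) (g w) (fun h => hne ?_) h1 h2
        rw [← hg v hv, ← hg w hw, h]
    clear hP hPd hQ hQd
    obtain ⟨l, hl, hld⟩ := hl
    obtain ⟨r, hr, hrd⟩ := hr
    -- crossing
    have cross : ∀ v ∈ insert x S, ∀ w ∈ insert y S, ∀ u, u ∈ l v ++ [v] → u ∈ w :: r w →
        v = w ∧ v ∈ S := by
      intro v hv w hw u hu hu'
      obtain ⟨a, b, hab⟩ := List.append_of_mem hu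
      obtain ⟨c, d, hcd⟩ := List.append_of_mem hu'
      obtain ⟨⟨hc1, ⟨a0, ha0, hh⟩, _⟩, hlv⟩ := hl v hv
      obtain ⟨⟨hc2, _, b0, hb0, hh'⟩, hrw⟩ := hr w hw
      rw [hab] at hc1 hh
      rw [hcd] at hc2 hh'
      have hal : ∀ z ∈ a, z ∈ l v := by
        intro z hz
        rcases List.eq_nil_or_concat b with rfl | ⟨b', e, rfl⟩
        · have := List.append_inj_left' hab rfl
          rwa [this]
        · rw [List.concat_eq_append, ← List.cons_append, ← List.append_assoc] at hab
          have := List.append_inj_left' hab rfl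
          rw [this]; simp [hz]
      have hdr : ∀ z ∈ d, z ∈ r w := by
        intro z hz
        cases c with
        | nil => simp at hcd; rw [hcd.2]; exact hz
        | cons e c => simp at hcd; rw [hcd.2]; simp [hz]
      obtain ⟨z, hz, hzp⟩ := hS (a ++ u :: d) ⟨List.isChain_split.2
        ⟨(List.isChain_split.1 hc1).1, (List.isChain_split.1 hc2).2⟩,
        ⟨a0, ha0, by revert hh; cases a <;> simp⟩, b0, hb0, by
          simpa [List.getLast?_append] using hh'⟩
      have hzu : z = u := by
        rcases List.mem_append.1 hzp with h | h
        · exact absurd (by simp [hz]) (hlv z (hal z h))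
        · rcases List.mem_cons.1 h with h | h
          · exact h
          · exact absurd (by simp [hz]) (hrw z (hdr z h))
      subst hzu
      have h1 : z = v := by
        rcases List.mem_append.1 hu with h | h
        · exact absurd (by simp [hz]) (hlv z h)
        · simpa using h
      have h2 : z = w := by
        rcases List.mem_cons.1 hu' with h | h
        · exact h
        · exact absurd (by simp [hz]) (hrw z h)
      exact ⟨h1.symm.trans h2, h1 ▸ hz⟩
    let σ : E → E := fun v => if v = x then y else v
    have hσx : σ x = y := by simp [σ]
    have hσ : ∀ v, v ≠ x → σ v = v := fun v hv => by simp [σ, hv]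
    have hσm : ∀ v ∈ insert x S, σ v ∈ insert y S := by
      intro v hv
      by_cases hvx : v = x
      · rw [hvx, hσx]; simp
      · rw [hσ v hvx]
        have := (Finset.mem_insert.1 hv).resolve_left hvx
        simp [this]
    have hσS : ∀ v ∈ insert x S, σ v ∈ S → σ v = v := by
      intro v hv h
      by_cases hvx : v = x
      · rw [hvx, hσx] at h; exact absurd h hyS
      · exact hσ v hvx
    have hσi : ∀ v ∈ insert x S, ∀ w ∈ insert x S, σ v = σ w → v = w := by
      intro v hv w hw he
      by_cases hvx : v = x <;> by_cases hwx : w = x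
      · rw [hvx, hwx]
      · rw [hvx, hσx, hσ w hwx] at he
        exact absurd (he ▸ (Finset.mem_insert.1 hw).resolve_left hwx) hyS
      · rw [hwx, hσx, hσ v hvx] at he
        exact absurd (he ▸ (Finset.mem_insert.1 hv).resolve_left hvx) hyS
      · rwa [hσ v hvx, hσ w hwx] at he
    have key : ∀ v ∈ insert x S, ∃ p, RPath R A B p ∧
        ∀ u ∈ p, u ∈ l v ++ [v] ∨ u ∈ σ v :: r (σ v) := by
      intro v hv
      obtain ⟨⟨hc1, ⟨a0, ha0, hh⟩, _⟩, _⟩ := hl v hv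
      obtain ⟨⟨hc2, _, b0, hb0, hh'⟩, _⟩ := hr _ (hσm v hv)
      have hc1' := hc1.imp (fun _ _ => hsub)
      have hc2' := hc2.imp (fun _ _ => hsub)
      by_cases hvx : v = x
      · refine ⟨l v ++ v :: σ v :: r (σ v), ⟨List.isChain_split.2 ⟨hc1', ?_⟩,
          ⟨a0, ha0, by revert hh; cases l v <;> simp⟩, b0, hb0, ?_⟩, ?_⟩
        · rw [List.isChain_cons_cons]
          refine ⟨?_, hc2'⟩
          rw [hvx, hσx]; exact hxy
        · simpa [List.getLast?_append] using hh'
        · intro u hu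
          simp only [List.mem_append, List.mem_cons, List.not_mem_nil, or_false] at hu ⊢
          tauto
      · rw [hσ v hvx] at hc2' hh' ⊢
        refine ⟨l v ++ v :: r v, ⟨List.isChain_split.2 ⟨hc1', hc2'⟩,
          ⟨a0, ha0, by revert hh; cases l v <;> simp⟩, b0, hb0, ?_⟩, ?_⟩
        · simpa [List.getLast?_append] using hh'
        · intro u hu
          simp only [List.mem_append, List.mem_cons, List.not_mem_nil, or_false] at hu ⊢
          tauto
    choose! F hF hFm using key
    let e := (Finset.equivFinOfCardEq hnx).symm
    refine ⟨fun i => F (e i), fun i => hF _ (e i).2, fun i j hij u hu hu' => ?_⟩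
    have hne : (e i : E) ≠ e j := fun h => hij (e.injective (Subtype.ext h))
    have hi := (e i).2
    have hj := (e j).2
    rcases hFm _ hi u hu with h1 | h1 <;> rcases hFm _ hj u hu' with h2 | h2
    · exact hld _ hi _ hj hne h1 h2
    · obtain ⟨h3, h4⟩ := cross _ hi _ (hσm _ hj) u h1 h2
      exact hne (h3.trans (hσS _ hj (h3 ▸ h4)))
    · obtain ⟨h3, h4⟩ := cross _ hj _ (hσm _ hi) u h2 h1
      exact hne (h3.trans (hσS _ hi (h3 ▸ h4))).symm
    · exact hrd _ (hσm _ hi) _ (hσm _ hj) (fun h => hne (hσi _ hi _ hj h)) h1 h2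

theorem menger_edges {V E : Type*} [Fintype E] (tl hd : E → V) (s t : V) :
    ∃ P : Fin (nmincut tl hd s t) → List E,
      (∀ i, NPathFromTo tl hd s t (P i)) ∧ EdgeDisjoint P := by
  classical
  have conv : ∀ p, RPath (Finset.univ.filter fun q : E × E => hd q.1 = tl q.2)
      (Finset.univ.filter fun e => tl e = s) (Finset.univ.filter fun e => hd e = t) p ↔
      NPathFromTo tl hd s t p := by
    intro p
    simp only [RPath, NPathFromTo, PathFrom, EChain, Finset.mem_filter, Finset.mem_univ, true_and]
    constructor
    · rintro ⟨hc, ⟨a, ha, hpa⟩, b, hb, hpb⟩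
      refine ⟨⟨?_, hc, ?_⟩, ?_⟩
      · rintro rfl; simp at hpa
      · intro e he; rw [hpa] at he; simp at he; rw [← he]; exact ha
      · intro e he; rw [hpb] at he; simp at he; rw [← he]; exact hb
    · rintro ⟨⟨hne, hc, ha⟩, hb⟩
      exact ⟨hc, ⟨p.head hne, ha _ (List.head?_eq_some_head hne), List.head?_eq_some_head hne⟩,
        p.getLast hne, hb _ (List.getLast?_eq_some_getLast hne),
        List.getLast?_eq_some_getLast hne⟩
  obtain ⟨P, hP, hdis⟩ := menger_aux _ _ rfl _ _ (nmincut tl hd s t) (by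
    intro S hS
    refine Nat.sInf_le ⟨S, fun p hp => hS p ((conv p).2 hp), rfl⟩)
  exact ⟨P, fun i => (conv _).1 (hP i), hdis⟩

/-- `CUT₁ ≤ CUT₂` iff there exist `n = mincut(s,t)` edge-disjoint
paths from `s` to `t` on each of which the edge of `CUT₁` precedes (or equals)
the edge of `CUT₂`. -/
theorem cut_le_iff_exists_paths {V E : Type*} [Fintype E] (tl hd : E → V) (s t : V)
    (hacy : Acyclic tl hd) (hsrc : ∀ e : E, hd e ≠ s) (hts : t ≠ s)
    (CUT₁ CUT₂ : Finset E)
    (h₁ : IsNodeMinCut tl hd s t CUT₁) (h₂ : IsNodeMinCut tl hd s t CUT₂) :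
    Separates tl hd s CUT₂ CUT₁ ↔
      ∃ P : Fin (nmincut tl hd s t) → List E,
        (∀ i, NPathFromTo tl hd s t (P i)) ∧ EdgeDisjoint P ∧
        (∀ i, ∀ e₁ ∈ P i, ∀ e₂ ∈ P i, e₁ ∈ CUT₁ → e₂ ∈ CUT₂ →
          EdgeLe tl hd e₁ e₂) := by
  classical
  have uniq : ∀ (C : Finset E), IsNodeMinCut tl hd s t C →
      ∀ P : Fin (nmincut tl hd s t) → List E, (∀ i, NPathFromTo tl hd s t (P i)) →
      EdgeDisjoint P → ∃ f : Fin (nmincut tl hd s t) → E, (∀ i, f i ∈ C ∧ f i ∈ P i) ∧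
        (∀ v ∈ C, ∃ i, f i = v) ∧ ∀ i, ∀ v ∈ C, v ∈ P i → v = f i := by
    intro C hC P hP hd
    choose f hf hfP using fun i => hC.1 (P i) (hP i)
    exact ⟨f, fun i => ⟨hf i, hfP i⟩, index_of_disjoint P hd C hC.2 f hfP hf⟩
  constructor
  · intro hsep
    obtain ⟨P, hP, hPd⟩ := menger_edges tl hd s t
    refine ⟨P, hP, hPd, fun i e₁ he₁ e₂ he₂ h1 h2 => ?_⟩
    obtain ⟨f, hf, -, hfu⟩ := uniq CUT₁ h₁ P hP hPd
    obtain ⟨⟨hne, hc, hh⟩, -⟩ := hP i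
    obtain ⟨a, b, hab⟩ := List.append_of_mem he₂
    have hc' : EChain tl hd (a ++ [e₂]) := by
      unfold EChain at hc ⊢
      rw [hab] at hc
      exact (List.isChain_split.1 hc).1
    obtain ⟨z, hz, hzp⟩ := hsep (a ++ [e₂]) ⟨by simp, hc', by
      intro e he
      apply hh
      rw [hab]
      revert he
      cases a <;> simp⟩ ⟨e₂, by simp, h2⟩
    have hze : z = e₁ := by
      rw [hfu i e₁ h1 he₁]
      apply hfu i z hz
      rw [hab]
      simp only [List.mem_append, List.mem_cons, List.not_mem_nil, or_false] at hzp ⊢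
      tauto
    subst hze
    obtain ⟨c, d, hcd⟩ := List.append_of_mem hzp
    refine ⟨z :: d, ?_, by simp, ?_⟩
    · unfold EChain at hc' ⊢
      rw [hcd] at hc'
      exact (List.isChain_split.1 hc').2
    · have : (a ++ [e₂]).getLast? = some e₂ := by simp
      rw [hcd] at this
      simpa [List.getLast?_append] using this
  · rintro ⟨P, hP, hPd, hle⟩ p ⟨hne, hc, hh⟩ ⟨e₂, he₂, h2⟩
    by_contra hno
    push Not at hno
    obtain ⟨f, hf, hfs, hfu⟩ := uniq CUT₁ h₁ P hP hPd
    obtain ⟨g, hg, hgs, -⟩ := uniq CUT₂ h₂ P hP hPd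
    obtain ⟨i, rfl⟩ := hgs e₂ h2
    obtain ⟨q, rfl⟩ := List.getLast?_eq_some_iff.1 he₂
    obtain ⟨a, b, hab⟩ := List.append_of_mem (hg i).2
    obtain ⟨⟨-, hc2, -⟩, hlast⟩ := hP i
    unfold EChain at hc hc2
    rw [hab] at hc2 hlast
    have hc3 := (List.isChain_split.1 hc2).2
    obtain ⟨z, hz, hzp⟩ := h₁.1 (q ++ g i :: b) ⟨⟨by simp, List.isChain_split.2 ⟨hc, hc3⟩, by
      intro e he
      apply hh
      revert he
      cases q <;> simp⟩, by
      intro e he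
      apply hlast
      simpa [List.getLast?_append] using he⟩
    have hzb : z ∈ b := by
      have := hno z hz
      simp only [List.mem_append, List.mem_cons, List.not_mem_nil, or_false] at hzp this
      tauto
    obtain ⟨c, d, hcd⟩ := List.append_of_mem hzb
    subst hcd
    obtain ⟨r, hr, hr1, hr2⟩ := hle i z (by rw [hab]; simp) (g i) (hg i).2 hz h2
    obtain ⟨r', rfl⟩ := List.getLast?_eq_some_iff.1 hr2
    -- the closed walk from `z` to `g i` and then to the tail of `z`
    have hc4 : List.IsChain (fun d e => hd d = tl e) ((g i :: c) ++ z :: d) := hc3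
    have hc5 := (List.isChain_split.1 hc4).1
    rw [List.cons_append] at hc5
    have hc6 : List.IsChain (fun d e => hd d = tl e) ((r' ++ g i :: c) ++ [z]) := by
      rw [List.append_assoc, List.cons_append]
      exact List.isChain_split.2 ⟨hr, hc5⟩
    rw [List.isChain_append] at hc6
    have hne' : r' ++ g i :: c ≠ [] := by simp
    refine hacy _ hne' hc6.1 z ?_ _ (List.getLast?_eq_some_getLast hne') ?_
    · revert hr1
      cases r' <;> simp
    · exact hc6.2.2 _ (List.getLast?_eq_some_getLast hne') z (by simp)
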